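/- Let ℓ ≥ 3 be an odd integer. Then the minimal cardinality of a finite subset T ⊆ D(ℓ) with 0 ∈ Conv(T) is exactly 4. (For ℓ = 3 such a minimal set is {(1/2,1/2,1/2), (−1/2,−1/2,1/2), (−1/2,1/2,−1/2), (1/2,−1/2,−1/2)}.) -/

import Mathlib

/-- The Weyl group orbit `D(ℓ)` of the highest weight of a half-spin representation of
`Spin(2ℓ)`: vectors in `ℝ^ℓ` with all coordinates `± 1/2` and an even number of
negative coordinates. -/
def halfSpinOrbit (l : ℕ) : Set (Fin l → ℝ) :=
  {v | (∀ i, v i = 1 / 2 ∨ v i = -(1 / 2)) ∧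
      Even (Finset.univ.filter (fun i => v i = -(1 / 2))).card}

/-- Two vectors of `D(ℓ)`, `ℓ` odd, agree in at least one coordinate. -/
lemma halfSpin_agree (l : ℕ) (hodd : Odd l) (a b : Fin l → ℝ) (ha : a ∈ halfSpinOrbit l)
    (hb : b ∈ halfSpinOrbit l) : ∃ i, a i = b i := by
  by_contra! h
  obtain ⟨ha1, ha2⟩ := ha
  obtain ⟨hb1, hb2⟩ := hb
  have key : (Finset.univ.filter (fun i => b i = -(1 / 2))) =
      Finset.univ.filter (fun i => ¬ (a i = -(1 / 2))) := by
    ext i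
    simp only [Finset.mem_filter, Finset.mem_univ, true_and]
    constructor
    · intro hbi hai
      exact h i (hai.trans hbi.symm)
    · intro hai
      rcases hb1 i with h1 | h1
      · rcases ha1 i with h2 | h2
        · exact absurd (h2.trans h1.symm) (h i)
        · exact absurd h2 hai
      · exact h1
  have hs := Finset.card_filter_add_card_filter_not (s := (Finset.univ : Finset (Fin l)))
    (fun i => a i = -(1 / 2))
  rw [← key, Finset.card_univ, Fintype.card_fin] at hs
  have : Even l := by
    rw [← hs]
    exact ha2.add hb2
  exact (Nat.not_even_iff_odd.mpr hodd) this

lemma halfSpin_weight (x y z p q r : ℝ) (hx : x = 1 / 2 ∨ x = -(1 / 2))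
    (hz : z = 1 / 2 ∨ z = -(1 / 2)) (hxy : x = y) (hs : p + q + r = 1)
    (h0 : p * x + q * y + r * z = 0) : r = 1 / 2 := by
  subst hxy
  rcases hx with rfl | rfl <;> rcases hz with rfl | rfl <;> linarith

lemma halfSpin_three (l : ℕ) (hodd : Odd l) (a b c : Fin l → ℝ) (ha : a ∈ halfSpinOrbit l)
    (hb : b ∈ halfSpinOrbit l) (hc : c ∈ halfSpinOrbit l) :
    (0 : Fin l → ℝ) ∉ convexHull ℝ ({a, b, c} : Set (Fin l → ℝ)) := by
  intro h
  rw [convexHull_insert (by simp), convexHull_pair, mem_convexJoin] at h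
  obtain ⟨a', ha', y, ⟨s, t, hs, ht, hst, rfl⟩, ⟨p, q, hp, hq, hpq, h0⟩⟩ := h
  obtain rfl : a' = a := ha'
  have h0' : ∀ i, p * a' i + q * s * b i + q * t * c i = 0 := by
    intro i
    have := congrFun h0 i
    simp only [Pi.add_apply, Pi.smul_apply, smul_eq_mul, Pi.zero_apply] at this
    linarith
  have hsum : p + q * s + q * t = 1 := by
    rw [add_assoc, ← mul_add, hst, mul_one, hpq]
  obtain ⟨i, hi⟩ := halfSpin_agree l hodd a' b ha hb
  obtain ⟨j, hj⟩ := halfSpin_agree l hodd b c hb hc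
  obtain ⟨k, hk⟩ := halfSpin_agree l hodd a' c ha hc
  have e1 := halfSpin_weight _ _ (c i) p (q * s) (q * t) (ha.1 i) (hc.1 i) hi hsum (h0' i)
  have e2 := halfSpin_weight _ _ (a' j) (q * s) (q * t) p (hb.1 j) (ha.1 j) hj
    (by linarith) (by linarith [h0' j])
  have e3 := halfSpin_weight _ _ (b k) p (q * t) (q * s) (ha.1 k) (hb.1 k) hk
    (by linarith) (by linarith [h0' k])
  linarith

/-- The vector `(x, y, z, z, …, z)`. -/
def halfSpinVec (l : ℕ) (x y z : ℝ) : Fin l → ℝ :=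
  fun i => if i.val = 0 then x else if i.val = 1 then y else z

lemma halfSpinVec_mem (m : ℕ) (x y z : ℝ) (hx : x = 1 / 2 ∨ x = -(1 / 2))
    (hy : y = 1 / 2 ∨ y = -(1 / 2)) (hz : z = 1 / 2 ∨ z = -(1 / 2))
    (h : Even ((if x = -(1 / 2) then 1 else 0) + ((if y = -(1 / 2) then 1 else 0) +
      (m * (if z = -(1 / 2) then 1 else 0))))) :
    halfSpinVec (m + 2) x y z ∈ halfSpinOrbit (m + 2) := by
  constructor
  · intro i
    unfold halfSpinVec
    split_ifs <;> assumption
  · rw [Finset.card_filter, Fin.sum_univ_succ, Fin.sum_univ_succ]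
    simpa [halfSpinVec] using h

theorem minCard_halfSpin (l : ℕ) (hl : 3 ≤ l) (hodd : Odd l) :
    IsLeast {k : ℕ | ∃ T : Finset (Fin l → ℝ), ↑T ⊆ halfSpinOrbit l ∧ T.card = k ∧
      (0 : Fin l → ℝ) ∈ convexHull ℝ (T : Set (Fin l → ℝ))} 4 := by
  classical
  constructor
  · obtain ⟨k, rfl⟩ : ∃ k, l = (2 * k + 1) + 2 := by
      obtain ⟨k, rfl⟩ := hodd
      exact ⟨k - 1, by omega⟩
    set L := 2 * k + 1 + 2 with hL
    have n1 : ((1 : ℝ) / 2) ≠ -(1 / 2) := by norm_num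
    have ev : Even (1 + (2 * k + 1)) := ⟨k + 1, by ring⟩
    set v1 := halfSpinVec L (1 / 2) (1 / 2) (1 / 2) with h1
    set v2 := halfSpinVec L (-(1 / 2)) (-(1 / 2)) (1 / 2) with h2
    set v3 := halfSpinVec L (-(1 / 2)) (1 / 2) (-(1 / 2)) with h3
    set v4 := halfSpinVec L (1 / 2) (-(1 / 2)) (-(1 / 2)) with h4
    have m1 : v1 ∈ halfSpinOrbit L :=
      halfSpinVec_mem _ _ _ _ (.inl rfl) (.inl rfl) (.inl rfl) (by rw [if_neg n1]; simp)
    have m2 : v2 ∈ halfSpinOrbit L :=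
      halfSpinVec_mem _ _ _ _ (.inr rfl) (.inr rfl) (.inl rfl) (by rw [if_pos rfl, if_neg n1]; simp)
    have m3 : v3 ∈ halfSpinOrbit L :=
      halfSpinVec_mem _ _ _ _ (.inr rfl) (.inl rfl) (.inr rfl)
        (by rw [if_pos rfl, if_neg n1]; simpa using ev)
    have m4 : v4 ∈ halfSpinOrbit L :=
      halfSpinVec_mem _ _ _ _ (.inl rfl) (.inr rfl) (.inr rfl)
        (by rw [if_pos rfl, if_neg n1]; simpa using ev)
    have ne : ∀ x y z x' y' z' : ℝ, (x ≠ x' ∨ y ≠ y') →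
        halfSpinVec L x y z ≠ halfSpinVec L x' y' z' := by
      intro x y z x' y' z' h he
      have e0 := congrFun he ⟨0, by omega⟩
      have e1 := congrFun he ⟨1, by omega⟩
      simp [halfSpinVec] at e0 e1
      tauto
    have n12 : v1 ≠ v2 := ne _ _ _ _ _ _ (.inl (by norm_num))
    have n13 : v1 ≠ v3 := ne _ _ _ _ _ _ (.inl (by norm_num))
    have n14 : v1 ≠ v4 := ne _ _ _ _ _ _ (.inr (by norm_num))
    have n23 : v2 ≠ v3 := ne _ _ _ _ _ _ (.inr (by norm_num))
    have n24 : v2 ≠ v4 := ne _ _ _ _ _ _ (.inl (by norm_num))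
    have n34 : v3 ≠ v4 := ne _ _ _ _ _ _ (.inl (by norm_num))
    refine ⟨{v1, v2, v3, v4}, ?_, ?_, ?_⟩
    · intro x hx
      simp only [Finset.coe_insert, Finset.coe_singleton, Set.mem_insert_iff,
        Set.mem_singleton_iff] at hx
      rcases hx with rfl | rfl | rfl | rfl <;> assumption
    · rw [Finset.card_insert_of_notMem (by simp [n12, n13, n14]),
        Finset.card_insert_of_notMem (by simp [n23, n24]), Finset.card_pair n34]
    · rw [Finset.mem_convexHull']
      refine ⟨fun _ => 1 / 4, fun _ _ => by norm_num, ?_, ?_⟩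
      · rw [Finset.sum_insert (by simp [n12, n13, n14]),
          Finset.sum_insert (by simp [n23, n24]), Finset.sum_pair n34]
        norm_num
      · rw [Finset.sum_insert (by simp [n12, n13, n14]),
          Finset.sum_insert (by simp [n23, n24]), Finset.sum_pair n34]
        funext i
        simp only [h1, h2, h3, h4, halfSpinVec, Pi.add_apply, Pi.smul_apply, smul_eq_mul,
          Pi.zero_apply]
        split_ifs <;> norm_num
  · rintro n ⟨T, hT, hn, h0⟩
    by_contra! hlt
    have hcov : ∃ a b c, a ∈ T ∧ b ∈ T ∧ c ∈ T ∧ T ⊆ {a, b, c} := by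
      interval_cases n
      · rw [Finset.card_eq_zero] at hn
        subst hn
        simp at h0
      · obtain ⟨a, rfl⟩ := Finset.card_eq_one.mp hn
        exact ⟨a, a, a, by simp⟩
      · obtain ⟨a, b, _, rfl⟩ := Finset.card_eq_two.mp hn
        exact ⟨a, b, b, by simp⟩
      · obtain ⟨a, b, c, _, _, _, rfl⟩ := Finset.card_eq_three.mp hn
        exact ⟨a, b, c, by simp⟩
    obtain ⟨a, b, c, ha, hb, hc, hsub⟩ := hcov
    refine halfSpin_three l hodd a b c (hT ha) (hT hb) (hT hc) (convexHull_mono ?_ h0)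
    intro x hx
    simpa using hsub hx
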